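/- arXiv:2511.02007 — 2 statements merged into one kernel-verified Lean document; each statement's English description precedes it below -/
import Mathlib

section
/- Let V be a vector space over ℂ, let c ∈ ℂ, and let L, L̄ : ℤ → End_ℂ(V) be two families of linear endomorphisms satisfying the Virasoro relations [L_m, L_n] = (m−n)·L_{m+n} + (c/12)·(m³−m)·δ_{m+n,0}·id_V and [L̄_m, L̄_n] = (m−n)·L̄_{m+n} + (c/12)·(m³−m)·δ_{m+n,0}·id_V for all m,n ∈ ℤ, and [L_m, L̄_n] = 0 for all m,n ∈ ℤ. Suppose D ∈ End_ℂ(V) satisfies [L_n − L̄_{−n}, D] = 0 for all n ∈ ℤ and [L_0 + L̄_0, D] = 0. Then [L_n, D] = 0 and [L̄_n, D] = 0 for all n ∈ ℤ. -/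
/-! Adding `[L₀ − L̄₀, D] = 0` and `[L₀ + L̄₀, D] = 0` gives `2 [L₀, D] = 0`, so `[L₀, D] = 0`. The
elements annihilating `D` are closed under brackets, and bracketing `L₀` with `Lₙ − L̄₋ₙ` isolates
the chiral part `−n Lₙ`, because `L₀` commutes with `L̄₋ₙ`. Dividing by `n` gives `[Lₙ, D] = 0`, and
conformality then carries this over to `L̄₋ₙ`. -/

section LieRing

variable {𝔤 : Type*} [LieRing 𝔤]

theorem lie_index_zero_of_witt_extension {R : Type*} [Ring R] [Module R 𝔤]
    {L : ℤ → 𝔤} {γ : ℤ → R} {z : 𝔤} (hγ : γ 0 = 0)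
    (hL : ∀ m n : ℤ, ⁅L m, L n⁆ =
      ((m : R) - (n : R)) • L (m + n) + (if m + n = 0 then γ m else 0) • z) (n : ℤ) :
    ⁅L 0, L n⁆ = -n • L n := by
  rw [hL 0 n, hγ, ite_self, zero_smul, add_zero, zero_add, ← Int.cast_sub, zero_sub,
    Int.cast_smul_eq_zsmul]

variable {M : Type*} [AddCommGroup M] [LieRingModule 𝔤 M]

theorem lie_lie_eq_zero_of_lie_eq_zero {x y : 𝔤} {d : M} (hx : ⁅x, d⁆ = 0) (hy : ⁅y, d⁆ = 0) :
    ⁅⁅x, y⁆, d⁆ = 0 := by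
  rw [lie_lie, hx, hy, lie_zero, lie_zero, sub_zero]

variable [IsAddTorsionFree M]

theorem lie_eq_zero_of_zsmul_lie_eq_zero {k : ℤ} (hk : k ≠ 0) {x : 𝔤} {d : M}
    (h : ⁅k • x, d⁆ = 0) : ⁅x, d⁆ = 0 := by
  rwa [zsmul_lie, IsAddTorsionFree.zsmul_eq_zero_iff_right hk] at h

theorem lie_eq_zero_of_lie_sub_of_weight_ne_zero {k : ℤ} (hk : k ≠ 0) {x a b : 𝔤} {d : M}
    (ha : ⁅x, a⁆ = k • a) (hb : ⁅x, b⁆ = 0) (hx : ⁅x, d⁆ = 0) (hab : ⁅a - b, d⁆ = 0) :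
    ⁅a, d⁆ = 0 := by
  have isolate : ⁅x, a - b⁆ = k • a := by rw [lie_sub, ha, hb, sub_zero]
  exact lie_eq_zero_of_zsmul_lie_eq_zero hk (isolate ▸ lie_lie_eq_zero_of_lie_eq_zero hx hab)

theorem lie_eq_zero_of_lie_sub_of_lie_add {x y : 𝔤} {d : M}
    (hsub : ⁅x - y, d⁆ = 0) (hadd : ⁅x + y, d⁆ = 0) : ⁅x, d⁆ = 0 := by
  refine lie_eq_zero_of_zsmul_lie_eq_zero two_ne_zero ?_
  calc ⁅(2 : ℤ) • x, d⁆ = ⁅(x - y) + (x + y), d⁆ := by rw [sub_add_add_cancel, two_zsmul]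
    _ = 0 := by rw [add_lie, hsub, hadd, add_zero]

/-- Taking `M = Hom(V, W)` for two representations of `𝔤` covers defects between different
theories. -/
theorem translation_invariant_conformal_defect_is_topological_general {L Lbar : ℤ → 𝔤}
    (hL : ∀ n : ℤ, ⁅L 0, L n⁆ = -n • L n) (hLLbar : ∀ n : ℤ, ⁅L 0, Lbar n⁆ = 0) {D : M}
    (hconf : ∀ n : ℤ, ⁅L n - Lbar (-n), D⁆ = 0) (htrans : ⁅L 0 + Lbar 0, D⁆ = 0) (n : ℤ) :
    ⁅L n, D⁆ = 0 ∧ ⁅Lbar n, D⁆ = 0 := by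
  have chiral_zero : ⁅L 0, D⁆ = 0 :=
    lie_eq_zero_of_lie_sub_of_lie_add (hconf 0) htrans
  have chiral (k : ℤ) : ⁅L k, D⁆ = 0 := by
    obtain rfl | hk := eq_or_ne k 0
    · exact chiral_zero
    · exact lie_eq_zero_of_lie_sub_of_weight_ne_zero (neg_ne_zero.mpr hk) (hL k) (hLLbar (-k))
        chiral_zero (hconf k)
  have antichiral : ⁅Lbar n, D⁆ = 0 := by
    simpa only [sub_lie, chiral, neg_neg, zero_sub, neg_eq_zero] using hconf (-n)
  exact ⟨chiral n, antichiral⟩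

end LieRing

/-- Let `V` be a vector space over `ℂ`, `c ∈ ℂ`, and `L, L̄ : ℤ → End_ℂ(V)` two commuting
families of endomorphisms each satisfying the Virasoro relations with central charge `c`.
If `D ∈ End_ℂ(V)` satisfies `[Lₙ − L̄₋ₙ, D] = 0` for all `n` (conformality) and
`[L₀ + L̄₀, D] = 0` (translation invariance), then `[Lₙ, D] = 0 = [L̄ₙ, D]` for all `n`
(`D` is topological). -/
theorem translation_invariant_conformal_defect_is_topological
    {V : Type*} [AddCommGroup V] [Module ℂ V] (c : ℂ)
    (L Lbar : ℤ → Module.End ℂ V)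
    (hL : ∀ m n : ℤ, L m * L n - L n * L m =
      ((m : ℂ) - (n : ℂ)) • L (m + n)
        + (if m + n = 0 then (c / 12) * ((m : ℂ) ^ 3 - (m : ℂ)) else 0) • (1 : Module.End ℂ V))
    (hLbar : ∀ m n : ℤ, Lbar m * Lbar n - Lbar n * Lbar m =
      ((m : ℂ) - (n : ℂ)) • Lbar (m + n)
        + (if m + n = 0 then (c / 12) * ((m : ℂ) ^ 3 - (m : ℂ)) else 0) • (1 : Module.End ℂ V))
    (hLLbar : ∀ m n : ℤ, L m * Lbar n - Lbar n * L m = 0)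
    (D : Module.End ℂ V)
    (hconf : ∀ n : ℤ, (L n - Lbar (-n)) * D - D * (L n - Lbar (-n)) = 0)
    (htrans : (L 0 + Lbar 0) * D - D * (L 0 + Lbar 0) = 0) :
    ∀ n : ℤ, L n * D - D * L n = 0 ∧ Lbar n * D - D * Lbar n = 0 := by
  let _ : LieRing (Module.End ℂ V) := .ofAssociativeRing
  have : IsAddTorsionFree (Module.End ℂ V) := .of_isTorsionFree ℂ _
  exact translation_invariant_conformal_defect_is_topological_general (D := D)
    (lie_index_zero_of_witt_extension (γ := fun m ↦ c / 12 * ((m : ℂ) ^ 3 - m)) (by simp) hL)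
    (hLLbar 0) hconf htrans
end

section
/- Suppose the triples (D, η, η̃) and (E, ζ, ζ̃) both satisfy the commutation condition for ω. Then the triple (D⊗E, T(η,ζ), T̃(η̃,ζ̃)), where (suppressing associators) T(η,ζ) = (η⊗id_E) + (id_D⊗ζ)∘(γ_D⊗id_E) : X⊗(D⊗E) → D⊗E and T̃(η̃,ζ̃) = (id_D⊗ζ̃) + (η̃⊗id_E)∘(id_D⊗δ_E⁻¹) : (D⊗E)⊗Y → D⊗E, again satisfies the commutation condition for ω. -/
open CategoryTheory MonoidalCategory

variable {M : Type*} [Category M] [MonoidalCategory M]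
  [Preadditive M] [CategoryTheory.Linear ℂ M]
  [MonoidalPreadditive M] [MonoidalLinear ℂ M]

/-- The commutation condition for a triple `(D, η, η̃)` relative to objects `(X, γ)` and
`(Y, δ)` of the Drinfeld center of `M` and a pairing `ω : X ⊗ Y ⟶ 𝟙`.  As morphisms
`(X ⊗ D) ⊗ Y ⟶ D` (with all associators and unitors written out):
`(id_D ⊗ ω)∘(γ_D ⊗ id_Y) − (ω ⊗ id_D)∘(id_X ⊗ δ_D⁻¹) = η̃∘(η ⊗ id_Y) − η∘(id_X ⊗ η̃)`. -/
def CommCond (X Y : Center M) (ω : X.1 ⊗ Y.1 ⟶ 𝟙_ M)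
    (D : M) (η : X.1 ⊗ D ⟶ D) (η' : D ⊗ Y.1 ⟶ D) : Prop :=
  ((X.2.β D).hom ▷ Y.1) ≫ (α_ D X.1 Y.1).hom ≫ (D ◁ ω) ≫ (ρ_ D).hom
      - (α_ X.1 D Y.1).hom ≫ (X.1 ◁ (Y.2.β D).inv) ≫ (α_ X.1 Y.1 D).inv
          ≫ (ω ▷ D) ≫ (λ_ D).hom
    = (η ▷ Y.1) ≫ η' - (α_ X.1 D Y.1).hom ≫ (X.1 ◁ η') ≫ η

/-- The left action `T(η, ζ) : X ⊗ (D ⊗ E) ⟶ D ⊗ E` on a tensor product of two triples: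
`T(η,ζ) = (η ⊗ id_E) + (id_D ⊗ ζ)∘(γ_D ⊗ id_E)` (with associators written out). -/
def Tact (X : Center M) {D E : M} (η : X.1 ⊗ D ⟶ D) (ζ : X.1 ⊗ E ⟶ E) :
    X.1 ⊗ (D ⊗ E) ⟶ D ⊗ E :=
  (α_ X.1 D E).inv ≫ (η ▷ E)
    + (α_ X.1 D E).inv ≫ ((X.2.β D).hom ▷ E) ≫ (α_ D X.1 E).hom ≫ (D ◁ ζ)

/-- The right action `T̃(η̃, ζ̃) : (D ⊗ E) ⊗ Y ⟶ D ⊗ E` on a tensor product of two triples: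
`T̃(η̃,ζ̃) = (id_D ⊗ ζ̃) + (η̃ ⊗ id_E)∘(id_D ⊗ δ_E⁻¹)` (with associators written out). -/
def Tact' (Y : Center M) {D E : M} (η' : D ⊗ Y.1 ⟶ D) (ζ' : E ⊗ Y.1 ⟶ E) :
    (D ⊗ E) ⊗ Y.1 ⟶ D ⊗ E :=
  (α_ D E Y.1).hom ≫ (D ◁ ζ')
    + (α_ D E Y.1).hom ≫ (D ◁ (Y.2.β E).inv) ≫ (α_ D Y.1 E).inv ≫ (η' ▷ E)

/-!
Write `[η, η̃] = η̃ ∘ (η ⊗ id) − η ∘ (id ⊗ η̃)`. Both `T` and `T̃` are sums of an action on `D` and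
an action on `E`, so `[T, T̃]` is a sum of four commutators. The left action on `D` commutes with
the right action on `E` by the interchange law; the left action on `E` commutes with the right
action on `D` because naturality and the hexagon axioms reduce the two composites to ones differing
only in `γ_Y` against `δ_X⁻¹`, which transparency identifies. The two remaining terms are `[ζ, ζ̃]`
with `X` first moved past `D`, and `[η, η̃]` with `Y` first moved past `E`. Expanding them with the
hypotheses gives four pairing terms; in the inner two, `ω` is applied between `D` and `E`, so they
cancel, and the outer two are the pairing terms for `D ⊗ E` by the hexagon axioms.
-/

section HalfBraiding

variable {C : Type*} [Category* C] [MonoidalCategory C] {Y : C}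

lemma halfBraiding_inv_naturality (δ : HalfBraiding Y) {U V : C} (f : U ⟶ V) :
    f ▷ Y ≫ (δ.β V).inv = (δ.β U).inv ≫ Y ◁ f := by
  rw [Iso.comp_inv_eq, Category.assoc, δ.naturality, Iso.inv_hom_id_assoc]

lemma halfBraiding_inv_tensor (δ : HalfBraiding Y) (U V : C) :
    (δ.β (U ⊗ V)).inv =
      (α_ U V Y).hom ≫ U ◁ (δ.β V).inv ≫ (α_ U Y V).inv ≫ (δ.β U).inv ▷ V ≫ (α_ Y U V).hom :=
  eq_of_inv_eq_inv (by simp)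

end HalfBraiding

section Pairing

variable {C : Type*} [Category* C] [MonoidalCategory C] {X Y D E : C}

/-- The pairing term `(id_D ⊗ ω) ∘ (g ⊗ id_Y)`: the object `X` is moved across `D` along `g`,
which will be a half-braiding `γ_D`, and paired with `Y` on the right of `D`. -/
def pairOnRight (g : X ⊗ D ⟶ D ⊗ X) (ω : X ⊗ Y ⟶ 𝟙_ C) : (X ⊗ D) ⊗ Y ⟶ D :=
  g ▷ Y ≫ (α_ D X Y).hom ≫ D ◁ ω ≫ (ρ_ D).hom

/-- The pairing term `(ω ⊗ id_D) ∘ (id_X ⊗ d)`: the object `Y` is moved across `D` along `d`,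
which will be an inverse half-braiding `δ_D⁻¹`, and paired with `X` on the left of `D`. -/
def pairOnLeft (d : D ⊗ Y ⟶ Y ⊗ D) (ω : X ⊗ Y ⟶ 𝟙_ C) : (X ⊗ D) ⊗ Y ⟶ D :=
  (α_ X D Y).hom ≫ X ◁ d ≫ (α_ X Y D).inv ≫ ω ▷ D ≫ (λ_ D).hom

/-- Moves `X` across `D` along `g`, so that morphisms out of `(X ⊗ E) ⊗ Y` can be applied to the
right of `D`. -/
def splitOffLeft (g : X ⊗ D ⟶ D ⊗ X) (E Y : C) : (X ⊗ (D ⊗ E)) ⊗ Y ⟶ D ⊗ ((X ⊗ E) ⊗ Y) :=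
  ((α_ X D E).inv ≫ g ▷ E ≫ (α_ D X E).hom) ▷ Y ≫ (α_ D (X ⊗ E) Y).hom

/-- Moves `Y` across `E` along `d`, so that morphisms out of `(X ⊗ D) ⊗ Y` can be applied to the
left of `E`. -/
def splitOffRight (d : E ⊗ Y ⟶ Y ⊗ E) (X D : C) : (X ⊗ (D ⊗ E)) ⊗ Y ⟶ ((X ⊗ D) ⊗ Y) ⊗ E :=
  (α_ X (D ⊗ E) Y).hom ≫ X ◁ ((α_ D E Y).hom ≫ D ◁ d ≫ (α_ D Y E).inv) ≫
    (α_ X (D ⊗ Y) E).inv ≫ (α_ X D Y).inv ▷ E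

lemma pairOnRight_tensor (γ : HalfBraiding X) (ω : X ⊗ Y ⟶ 𝟙_ C) :
    pairOnRight (γ.β (D ⊗ E)).hom ω =
      splitOffLeft (γ.β D).hom E Y ≫ D ◁ pairOnRight (γ.β E).hom ω := by
  simp only [pairOnRight, splitOffLeft, γ.monoidal]
  monoidal

lemma pairOnLeft_tensor (δ : HalfBraiding Y) (ω : X ⊗ Y ⟶ 𝟙_ C) :
    pairOnLeft (δ.β (D ⊗ E)).inv ω =
      splitOffRight (δ.β E).inv X D ≫ pairOnLeft (δ.β D).inv ω ▷ E := by
  simp only [pairOnLeft, splitOffRight, halfBraiding_inv_tensor]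
  monoidal

lemma splitOffLeft_comp_pairOnLeft (g : X ⊗ D ⟶ D ⊗ X) (d : E ⊗ Y ⟶ Y ⊗ E)
    (ω : X ⊗ Y ⟶ 𝟙_ C) :
    splitOffLeft g E Y ≫ D ◁ pairOnLeft d ω = splitOffRight d X D ≫ pairOnRight g ω ▷ E := by
  simp only [pairOnLeft, pairOnRight, splitOffLeft, splitOffRight]
  calc
    _ = 𝟙 _ ⊗≫ (g ▷ (E ⊗ Y) ≫ (D ⊗ X) ◁ d) ⊗≫ D ◁ ω ▷ E ⊗≫ 𝟙 _ := by monoidal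
    _ = 𝟙 _ ⊗≫ ((X ⊗ D) ◁ d ≫ g ▷ (Y ⊗ E)) ⊗≫ D ◁ ω ▷ E ⊗≫ 𝟙 _ := by rw [whisker_exchange]
    _ = _ := by monoidal

end Pairing

section Action

variable {C : Type*} [Category* C] [MonoidalCategory C] {X Y D E : C}

/-- The left action of `X` on `D ⊗ E` through the first factor, the first summand of `T(η, ζ)`. -/
def leftActFst (η : X ⊗ D ⟶ D) (E : C) : X ⊗ (D ⊗ E) ⟶ D ⊗ E :=
  (α_ X D E).inv ≫ η ▷ E

/-- The left action of `X` on `D ⊗ E` through the second factor, the second summand of `T(η, ζ)`;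
`X` reaches `E` along `g`, which will be a half-braiding `γ_D`. -/
def leftActSnd (g : X ⊗ D ⟶ D ⊗ X) (ζ : X ⊗ E ⟶ E) : X ⊗ (D ⊗ E) ⟶ D ⊗ E :=
  (α_ X D E).inv ≫ g ▷ E ≫ (α_ D X E).hom ≫ D ◁ ζ

/-- The right action of `Y` on `D ⊗ E` through the second factor, the first summand of
`T̃(η̃, ζ̃)` for `θ = ζ̃`. -/
def rightActSnd (D : C) (θ : E ⊗ Y ⟶ E) : (D ⊗ E) ⊗ Y ⟶ D ⊗ E :=
  (α_ D E Y).hom ≫ D ◁ θ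

/-- The right action of `Y` on `D ⊗ E` through the first factor, the second summand of
`T̃(η̃, ζ̃)` for `θ = η̃`; `Y` reaches `D` along `d`, which will be an inverse half-braiding
`δ_E⁻¹`. -/
def rightActFst (d : E ⊗ Y ⟶ Y ⊗ E) (θ : D ⊗ Y ⟶ D) : (D ⊗ E) ⊗ Y ⟶ D ⊗ E :=
  (α_ D E Y).hom ≫ D ◁ d ≫ (α_ D Y E).inv ≫ θ ▷ E

variable [Preadditive C]

/-- The commutator `η̃ ∘ (η ⊗ id_Y) − η ∘ (id_X ⊗ η̃)` of a left action of `X` and a right action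
of `Y` on `D`. -/
def actionCommutator (η : X ⊗ D ⟶ D) (η' : D ⊗ Y ⟶ D) : (X ⊗ D) ⊗ Y ⟶ D :=
  η ▷ Y ≫ η' - (α_ X D Y).hom ≫ X ◁ η' ≫ η

lemma actionCommutator_leftActFst_rightActSnd (η : X ⊗ D ⟶ D) (ζ' : E ⊗ Y ⟶ E) :
    actionCommutator (leftActFst η E) (rightActSnd D ζ') = 0 := by
  simp only [actionCommutator, leftActFst, rightActSnd, sub_eq_zero]
  calc
    _ = 𝟙 _ ⊗≫ (η ▷ (E ⊗ Y) ≫ D ◁ ζ') := by monoidal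
    _ = 𝟙 _ ⊗≫ ((X ⊗ D) ◁ ζ' ≫ η ▷ E) := by rw [whisker_exchange]
    _ = _ := by monoidal

lemma actionCommutator_leftActSnd_rightActFst (γ : HalfBraiding X) (δ : HalfBraiding Y)
    (htransp : (γ.β Y).hom ≫ (δ.β X).hom = 𝟙 (X ⊗ Y)) (ζ : X ⊗ E ⟶ E) (η' : D ⊗ Y ⟶ D) :
    actionCommutator (leftActSnd (γ.β D).hom ζ) (rightActFst (δ.β E).inv η') = 0 := by
  have hγδ : (γ.β Y).hom = (δ.β X).inv := (Iso.comp_hom_eq_id _).1 htransp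
  have slide_ζ : ζ ▷ Y ≫ (δ.β E).inv =
      ((α_ X E Y).hom ≫ X ◁ (δ.β E).inv ≫ (α_ X Y E).inv ≫ (δ.β X).inv ▷ E ≫ (α_ Y X E).hom) ≫
        Y ◁ ζ := by
    rw [halfBraiding_inv_naturality, halfBraiding_inv_tensor]
  have slide_η' : X ◁ η' ≫ (γ.β D).hom =
      ((α_ X D Y).inv ≫ (γ.β D).hom ▷ Y ≫ (α_ D X Y).hom ≫ D ◁ (γ.β Y).hom ≫ (α_ D Y X).inv) ≫
        η' ▷ X := by
    rw [γ.naturality, γ.monoidal]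
  simp only [actionCommutator, leftActSnd, rightActFst, sub_eq_zero]
  calc
    _ = 𝟙 _ ⊗≫ (γ.β D).hom ▷ (E ⊗ Y) ⊗≫ D ◁ (ζ ▷ Y ≫ (δ.β E).inv) ⊗≫ η' ▷ E := by monoidal
    _ = 𝟙 _ ⊗≫ ((γ.β D).hom ▷ (E ⊗ Y) ≫ (D ⊗ X) ◁ (δ.β E).inv) ⊗≫ D ◁ (δ.β X).inv ▷ E ⊗≫
          ((D ⊗ Y) ◁ ζ ≫ η' ▷ E) := by
      rw [slide_ζ]; monoidal
    _ = 𝟙 _ ⊗≫ ((X ⊗ D) ◁ (δ.β E).inv ≫ (γ.β D).hom ▷ (Y ⊗ E)) ⊗≫ D ◁ (γ.β Y).hom ▷ E ⊗≫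
          (η' ▷ (X ⊗ E) ≫ D ◁ ζ) := by
      rw [whisker_exchange, whisker_exchange, hγδ]
    _ = 𝟙 _ ⊗≫ (X ⊗ D) ◁ (δ.β E).inv ⊗≫ (X ◁ η' ≫ (γ.β D).hom) ▷ E ⊗≫ D ◁ ζ := by
      rw [slide_η']; monoidal
    _ = _ := by monoidal

variable [MonoidalPreadditive C]

lemma whiskerLeft_sub (D : C) {U V : C} (f g : U ⟶ V) : D ◁ (f - g) = D ◁ f - D ◁ g :=
  (tensorLeft D).map_sub

lemma sub_whiskerRight {U V : C} (f g : U ⟶ V) (E : C) : (f - g) ▷ E = f ▷ E - g ▷ E :=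
  (tensorRight E).map_sub

lemma actionCommutator_add_left (η₁ η₂ : X ⊗ D ⟶ D) (η' : D ⊗ Y ⟶ D) :
    actionCommutator (η₁ + η₂) η' = actionCommutator η₁ η' + actionCommutator η₂ η' := by
  simp only [actionCommutator, MonoidalPreadditive.add_whiskerRight, Preadditive.add_comp,
    Preadditive.comp_add]
  abel

lemma actionCommutator_add_right (η : X ⊗ D ⟶ D) (η₁' η₂' : D ⊗ Y ⟶ D) :
    actionCommutator η (η₁' + η₂') = actionCommutator η η₁' + actionCommutator η η₂' := by
  simp only [actionCommutator, MonoidalPreadditive.whiskerLeft_add, Preadditive.add_comp,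
    Preadditive.comp_add]
  abel

lemma actionCommutator_leftActSnd_rightActSnd (g : X ⊗ D ⟶ D ⊗ X) (ζ : X ⊗ E ⟶ E)
    (ζ' : E ⊗ Y ⟶ E) :
    actionCommutator (leftActSnd g ζ) (rightActSnd D ζ') =
      splitOffLeft g E Y ≫ D ◁ actionCommutator ζ ζ' := by
  simp only [actionCommutator, leftActSnd, rightActSnd, splitOffLeft, whiskerLeft_sub,
    Preadditive.comp_sub]
  congr 1
  · monoidal
  · calc
      _ = 𝟙 _ ⊗≫ ((X ⊗ D) ◁ ζ' ≫ g ▷ E) ⊗≫ D ◁ ζ := by monoidal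
      _ = 𝟙 _ ⊗≫ (g ▷ (E ⊗ Y) ≫ (D ⊗ X) ◁ ζ') ⊗≫ D ◁ ζ := by rw [whisker_exchange]
      _ = _ := by monoidal

lemma actionCommutator_leftActFst_rightActFst (d : E ⊗ Y ⟶ Y ⊗ E) (η : X ⊗ D ⟶ D)
    (η' : D ⊗ Y ⟶ D) :
    actionCommutator (leftActFst η E) (rightActFst d η') =
      splitOffRight d X D ≫ actionCommutator η η' ▷ E := by
  simp only [actionCommutator, leftActFst, rightActFst, splitOffRight, sub_whiskerRight,
    Preadditive.comp_sub]
  congr 1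
  · calc
      _ = 𝟙 _ ⊗≫ (η ▷ (E ⊗ Y) ≫ D ◁ d) ⊗≫ η' ▷ E := by monoidal
      _ = 𝟙 _ ⊗≫ ((X ⊗ D) ◁ d ≫ η ▷ (Y ⊗ E)) ⊗≫ η' ▷ E := by rw [whisker_exchange]
      _ = _ := by monoidal
  · monoidal

end Action

section Tensor

variable {C : Type*} [Category* C] [MonoidalCategory C] [Preadditive C]

lemma commCond_iff (X Y : Center C) (ω : X.1 ⊗ Y.1 ⟶ 𝟙_ C) (D : C) (η : X.1 ⊗ D ⟶ D)
    (η' : D ⊗ Y.1 ⟶ D) :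
    CommCond X Y ω D η η' ↔
      pairOnRight (X.2.β D).hom ω - pairOnLeft (Y.2.β D).inv ω = actionCommutator η η' :=
  Iff.rfl

lemma tact_eq_add (X : Center C) {D E : C} (η : X.1 ⊗ D ⟶ D) (ζ : X.1 ⊗ E ⟶ E) :
    Tact X η ζ = leftActFst η E + leftActSnd (X.2.β D).hom ζ :=
  rfl

lemma tact'_eq_add (Y : Center C) {D E : C} (η' : D ⊗ Y.1 ⟶ D) (ζ' : E ⊗ Y.1 ⟶ E) :
    Tact' Y η' ζ' = rightActSnd D ζ' + rightActFst (Y.2.β E).inv η' :=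
  rfl

variable [MonoidalPreadditive C]

lemma pairOnRight_sub_pairOnLeft_tensor {X Y : C} (γ : HalfBraiding X) (δ : HalfBraiding Y)
    (ω : X ⊗ Y ⟶ 𝟙_ C) (D E : C) :
    pairOnRight (γ.β (D ⊗ E)).hom ω - pairOnLeft (δ.β (D ⊗ E)).inv ω =
      splitOffLeft (γ.β D).hom E Y ≫
          D ◁ (pairOnRight (γ.β E).hom ω - pairOnLeft (δ.β E).inv ω) +
        splitOffRight (δ.β E).inv X D ≫
          (pairOnRight (γ.β D).hom ω - pairOnLeft (δ.β D).inv ω) ▷ E := by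
  rw [whiskerLeft_sub, sub_whiskerRight, Preadditive.comp_sub, Preadditive.comp_sub,
    splitOffLeft_comp_pairOnLeft, sub_add_sub_cancel, ← pairOnRight_tensor, ← pairOnLeft_tensor]

lemma actionCommutator_tact_tact' (X Y : Center C)
    (htransp : (X.2.β Y.1).hom ≫ (Y.2.β X.1).hom = 𝟙 (X.1 ⊗ Y.1)) {D E : C}
    (η : X.1 ⊗ D ⟶ D) (η' : D ⊗ Y.1 ⟶ D) (ζ : X.1 ⊗ E ⟶ E) (ζ' : E ⊗ Y.1 ⟶ E) :
    actionCommutator (Tact X η ζ) (Tact' Y η' ζ') =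
      splitOffLeft (X.2.β D).hom E Y.1 ≫ D ◁ actionCommutator ζ ζ' +
        splitOffRight (Y.2.β E).inv X.1 D ≫ actionCommutator η η' ▷ E := by
  rw [tact_eq_add, tact'_eq_add, actionCommutator_add_left, actionCommutator_add_right,
    actionCommutator_add_right, actionCommutator_leftActFst_rightActSnd,
    actionCommutator_leftActFst_rightActFst, actionCommutator_leftActSnd_rightActSnd,
    actionCommutator_leftActSnd_rightActFst X.2 Y.2 htransp, zero_add, add_zero, add_comm]

theorem commCond_tensor_general (X Y : Center C)
    (htransp : (X.2.β Y.1).hom ≫ (Y.2.β X.1).hom = 𝟙 (X.1 ⊗ Y.1))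
    (ω : X.1 ⊗ Y.1 ⟶ 𝟙_ C)
    (D E : C) (η : X.1 ⊗ D ⟶ D) (η' : D ⊗ Y.1 ⟶ D)
    (ζ : X.1 ⊗ E ⟶ E) (ζ' : E ⊗ Y.1 ⟶ E)
    (hD : CommCond X Y ω D η η') (hE : CommCond X Y ω E ζ ζ') :
    CommCond X Y ω (D ⊗ E) (Tact X η ζ) (Tact' Y η' ζ') := by
  rw [commCond_iff] at hD hE ⊢
  rw [pairOnRight_sub_pairOnLeft_tensor, hD, hE, actionCommutator_tact_tact' X Y htransp]

end Tensor

/-- Assume the transparency condition: the composite `X ⊗ Y → Y ⊗ X → X ⊗ Y` of `γ_Y` followed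
by `δ_X` is the identity.  If `(D, η, η̃)` and `(E, ζ, ζ̃)` both satisfy the commutation
condition for `ω`, then the tensor-product triple `(D ⊗ E, T(η,ζ), T̃(η̃,ζ̃))` again
satisfies the commutation condition for `ω`. -/
theorem commCond_tensor (X Y : Center M)
    (htransp : (X.2.β Y.1).hom ≫ (Y.2.β X.1).hom = 𝟙 (X.1 ⊗ Y.1))
    (ω : X.1 ⊗ Y.1 ⟶ 𝟙_ M)
    (D E : M) (η : X.1 ⊗ D ⟶ D) (η' : D ⊗ Y.1 ⟶ D)
    (ζ : X.1 ⊗ E ⟶ E) (ζ' : E ⊗ Y.1 ⟶ E)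
    (hD : CommCond X Y ω D η η') (hE : CommCond X Y ω E ζ ζ') :
    CommCond X Y ω (D ⊗ E) (Tact X η ζ) (Tact' Y η' ζ') :=
  commCond_tensor_general X Y htransp ω D E η η' ζ ζ' hD hE
end
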